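/- arXiv:2103.14726 — 5 statements merged into one kernel-verified Lean document; each statement's English description precedes it below -/
import Mathlib

section
/- Let G be a finite simple graph on vertex set [n] with edge set E of size m̂, let A(G) be its adjacency matrix, D the n×n diagonal matrix with D_{i,i} = deg_G(i), and A(L(G)) the m̂×m̂ adjacency matrix of the line graph of G. Then, as polynomials over ℝ, X^n · charpoly(A(L(G)) + 2·I_{m̂}) = X^{m̂} · charpoly(A(G) + D). Equivalently, the spectrum of A(L(G)) is obtained from the multiset σ(A(G)+D) − 2 by adding m̂ − n copies of the eigenvalue −2 when m̂ ≥ n, and by deleting n − m̂ copies of −2 when m̂ < n. -/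
open scoped Classical
open Matrix Polynomial

noncomputable section

/-- The adjacency matrix (over `ℝ`) of the line graph of `G`: rows and columns are indexed by
the edges of `G`, with entry `1` when the two edges are distinct and share an endpoint. -/
def lineGraphAdjMatrix {V : Type*} (G : SimpleGraph V) [Fintype G.edgeSet] :
    Matrix G.edgeSet G.edgeSet ℝ :=
  fun e f => if (G.lineGraph).Adj e f then 1 else 0

/- The incidence matrix `M`, with rows indexed by the vertices and columns by the edges, satisfies
`Mᵀ * M = A(L(G)) + 2 I`, because an edge has two endpoints and distinct edges share at most one,
and `M * Mᵀ = A(G) + D`. Up to a power of `X`, the products `Mᵀ * M` and `M * Mᵀ` have the same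
characteristic polynomial. -/

theorem submatrix_mul_submatrix_of_injective {l m n o R : Type*} [Fintype m] [Fintype n]
    [NonUnitalNonAssocSemiring R] (A : Matrix l n R) (B : Matrix n o R) {e : m → n}
    (he : e.Injective) (hA : ∀ i, ∀ j ∉ Set.range e, A i j = 0) :
    A.submatrix id e * B.submatrix e id = A * B := by
  ext i k
  simp only [mul_apply, submatrix_apply, id_eq]
  exact Fintype.sum_of_injective e he _ _ (fun j hj => by rw [hA i j hj, zero_mul]) fun _ => rfl

theorem card_filter_mem_and_mem_of_ne {V : Type*} [Fintype V] [DecidableEq V] {e f : Sym2 V}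
    (hef : e ≠ f) :
    (Finset.univ.filter fun v => v ∈ e ∧ v ∈ f).card = if ∃ v, v ∈ e ∧ v ∈ f then 1 else 0 := by
  split_ifs with h
  · obtain ⟨v, hve, hvf⟩ := h
    refine Finset.card_eq_one.2 ⟨v, Finset.eq_singleton_iff_unique_mem.2 ⟨by simp [hve, hvf], ?_⟩⟩
    intro w hw
    obtain ⟨hwe, hwf⟩ := (Finset.mem_filter.1 hw).2
    by_contra hwv
    exact hef (Sym2.eq_of_ne_mem hwv hwe hve hwf hvf)
  · simpa [Finset.filter_eq_empty_iff] using h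

section EdgeIncMatrix

variable {V : Type*} [DecidableEq V] (G : SimpleGraph V) [DecidableRel G.Adj] (R : Type*)

/-- The unsigned incidence matrix of `G` with columns indexed by the edges of `G`, whereas the
columns of `SimpleGraph.incMatrix` are indexed by all unordered pairs of vertices. -/
def edgeIncMatrix [Zero R] [One R] : Matrix V G.edgeSet R :=
  (G.incMatrix R).submatrix id (↑)

theorem edgeIncMatrix_apply [Zero R] [One R] (v : V) (e : G.edgeSet) :
    edgeIncMatrix G R v e = if v ∈ (e : Sym2 V) then 1 else 0 := by
  simp [edgeIncMatrix, SimpleGraph.incMatrix_apply', SimpleGraph.incidenceSet]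

variable [Fintype V]

theorem edgeIncMatrix_mul_transpose [Semiring R] :
    edgeIncMatrix G R * (edgeIncMatrix G R)ᵀ = G.adjMatrix R + G.degMatrix R := by
  have incMatrix_eq_zero (v : V) (e : Sym2 V)
      (he : e ∉ Set.range ((↑) : G.edgeSet → Sym2 V)) : G.incMatrix R v e = 0 :=
    G.incMatrix_of_notMem_incidenceSet fun hve => he ⟨⟨e, hve.1⟩, rfl⟩
  calc edgeIncMatrix G R * (edgeIncMatrix G R)ᵀ
      = G.incMatrix R * (G.incMatrix R)ᵀ := by
        rw [edgeIncMatrix, transpose_submatrix, submatrix_mul_submatrix_of_injective _ _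
          Subtype.val_injective incMatrix_eq_zero]
    _ = G.adjMatrix R + G.degMatrix R := by
        rw [SimpleGraph.incMatrix_mul_transpose]
        ext v w
        obtain rfl | hvw := eq_or_ne v w
        · simp [SimpleGraph.degMatrix]
        · simp [SimpleGraph.degMatrix, hvw]

theorem edgeIncMatrix_transpose_mul_apply_of_ne [NonAssocSemiring R]
    [DecidableRel G.lineGraph.Adj] {e f : G.edgeSet} (hef : e ≠ f) :
    ((edgeIncMatrix G R)ᵀ * edgeIncMatrix G R) e f = G.lineGraph.adjMatrix R e f := by
  calc ((edgeIncMatrix G R)ᵀ * edgeIncMatrix G R) e f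
      = ((Finset.univ.filter fun v => v ∈ (e : Sym2 V) ∧ v ∈ (f : Sym2 V)).card : R) := by
        simp only [mul_apply, transpose_apply, edgeIncMatrix_apply, ite_zero_mul_ite_zero, one_mul,
          Finset.sum_boole]
    _ = G.lineGraph.adjMatrix R e f := by
        rw [card_filter_mem_and_mem_of_ne (Subtype.coe_injective.ne hef)]
        simp [SimpleGraph.adjMatrix_apply, SimpleGraph.lineGraph_adj_iff_exists, hef]

theorem edgeIncMatrix_transpose_mul [NonAssocSemiring R] [DecidableRel G.lineGraph.Adj] :
    (edgeIncMatrix G R)ᵀ * edgeIncMatrix G R = G.lineGraph.adjMatrix R + (2 : R) • 1 := by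
  ext e f
  obtain rfl | hef := eq_or_ne e f
  · have diag_eq_two : ((edgeIncMatrix G R)ᵀ * edgeIncMatrix G R) e e = 2 :=
      (G.incMatrix_transpose_mul_diag (R := R)).trans (if_pos e.2)
    simp [diag_eq_two]
  · simp [edgeIncMatrix_transpose_mul_apply_of_ne G R hef, hef]

theorem lineGraph_charpoly_general [CommRing R] [DecidableRel G.lineGraph.Adj] :
    X ^ Fintype.card V * (G.lineGraph.adjMatrix R + (2 : R) • 1).charpoly
      = X ^ G.edgeFinset.card * (G.adjMatrix R + G.degMatrix R).charpoly := by
  rw [← edgeIncMatrix_transpose_mul, ← edgeIncMatrix_mul_transpose, SimpleGraph.edgeFinset_card]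
  exact charpoly_mul_comm' (edgeIncMatrix G R)ᵀ (edgeIncMatrix G R)

end EdgeIncMatrix

/-- For a finite simple graph `G` on `n` vertices with `m̂` edges,
`X^n · charpoly(A(L(G)) + 2 I) = X^m̂ · charpoly(A(G) + D)`, where `D` is the diagonal
matrix of vertex degrees.  Consequently the spectrum of `A(L(G))` is obtained from
`σ(A(G)+D) − 2` by adding `m̂ − n` copies of `−2` (or deleting `n − m̂` copies of `−2`). -/
theorem lineGraph_charpoly {n : ℕ} (G : SimpleGraph (Fin n)) [DecidableRel G.Adj] :
    X ^ n * (lineGraphAdjMatrix G + (2 : ℝ) • (1 : Matrix G.edgeSet G.edgeSet ℝ)).charpoly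
      = X ^ G.edgeFinset.card *
        (G.adjMatrix ℝ + Matrix.diagonal (fun i => (G.degree i : ℝ))).charpoly := by
  have adjMatrix_eq : lineGraphAdjMatrix G = G.lineGraph.adjMatrix ℝ := rfl
  simpa [adjMatrix_eq, SimpleGraph.degMatrix] using lineGraph_charpoly_general G ℝ
end
end

section
/- Let [n] be partitioned into clusters C_1,…,C_k with |C_r| = n_r ≥ 2, and let M = Qᵀ A(L(K_n)) Q where Q is the associated block-indicator matrix. Then charpoly(M) = (X − (2n−4)) · (X − (n−4))^{k−1} · (X + 2)^{C(k,2)}; that is, the eigenvalues of M are 2n−4 (simple), n−4 with multiplicity k−1, and −2 with multiplicity C(k,2). -/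
open scoped Classical
open Matrix

noncomputable section

/-- The edges of the complete graph `K_n`: unordered pairs of distinct elements of `Fin n`. -/
def CompleteEdge (n : ℕ) : Type := {e : Sym2 (Fin n) // ¬ e.IsDiag}

instance (n : ℕ) : Fintype (CompleteEdge n) := Subtype.fintype _
instance (n : ℕ) : DecidableEq (CompleteEdge n) := Subtype.instDecidableEq

/-- The adjacency matrix of the line graph of the complete graph `K_n`: rows and columns are
indexed by the edges of `K_n`, with entry `1` exactly when the two edges are distinct and share
an endpoint. -/
def ALK (n : ℕ) : Matrix (CompleteEdge n) (CompleteEdge n) ℝ :=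
  fun e f => if e ≠ f ∧ ∃ v, v ∈ e.1 ∧ v ∈ f.1 then 1 else 0

variable {n k : ℕ}

/-- The block of the induced edge partition to which an edge belongs: the unordered pair of
clusters of its two endpoints. Blocks are indexed by `Sym2 (Fin k)`, which has
cardinality `C(k+1,2)`. -/
def blkOf (c : Fin n → Fin k) (e : CompleteEdge n) : Sym2 (Fin k) := Sym2.map c e.1

/-- The size `m_{r,s}` of a block of the induced edge partition. -/
def blkSize (c : Fin n → Fin k) (b : Sym2 (Fin k)) : ℕ :=
  (Finset.univ.filter (fun e : CompleteEdge n => blkOf c e = b)).card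

/-- The block-indicator matrix `Q` of the induced edge partition:
`Q_{e,(r,s)} = m_{r,s}^{-1/2}` if `e ∈ C_{(r,s)}` and `0` otherwise. -/
def Qmat (c : Fin n → Fin k) : Matrix (CompleteEdge n) (Sym2 (Fin k)) ℝ :=
  fun e b => if blkOf c e = b then 1 / Real.sqrt (blkSize c b) else 0

/-- `M = Qᵀ A(L(K_n)) Q`. -/
def Mmat (c : Fin n → Fin k) : Matrix (Sym2 (Fin k)) (Sym2 (Fin k)) ℝ :=
  (Qmat c)ᵀ * ALK n * Qmat c

/-- The size of the cluster `C_r`. -/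
def clusterSize (c : Fin n → Fin k) (r : Fin k) : ℕ :=
  (Finset.univ.filter (fun i => c i = r)).card

/-!
Write `N` for the edge-vertex incidence matrix of `K_n`, `P` and `S` for the `0/1` indicator
matrices of the edge blocks and of the clusters, `E` for the matrix counting the endpoints of a
block in each cluster, and `D` for the matrix whose `(r, b)` entry is the number of edges of
block `b` at a vertex of cluster `r`. Then `A(L(K_n)) = N Nᵀ - 2`, while `N S = P E` and
`Nᵀ P = S D`, so that `A(L(K_n)) P = P (E D - 2)`: the edge partition is equitable, and `M` is
similar to its quotient matrix `E D - 2`. The nonzero spectrum of `E D` is that of the `k × k`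
matrix `D E`, and `D E` is `n - 2` plus the rank one matrix all of whose rows are
`(n_1, …, n_k)`.
-/

open Polynomial in
theorem charpoly_vecMulVec_add_scalar {R m : Type*} [CommRing R] [Fintype m] [DecidableEq m]
    [Nonempty m] (u v : m → R) (μ : R) :
    (vecMulVec u v + scalar m μ).charpoly
      = (X - C (u ⬝ᵥ v + μ)) * (X - C μ) ^ (Fintype.card m - 1) := by
  obtain ⟨d, hd⟩ := Nat.exists_eq_add_one.2 (Fintype.card_pos (α := m))
  rw [← sub_neg_eq_add, ← map_neg, charpoly_sub_scalar, charpoly_vecMulVec, hd]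
  simp only [smul_eq_C_mul, sub_comp, mul_comp, pow_comp, X_comp, C_comp, C_neg, C_add,
    Nat.add_sub_cancel]
  ring

section IndicatorMatrix

variable {α β γ : Type*} [DecidableEq β]

/-- The indicator matrix of the partition of `α` into the fibres of `f`: the column of `b` is the
indicator vector of the fibre over `b`. -/
def indicatorMatrix (R : Type*) [Zero R] [One R] (f : α → β) : Matrix α β R :=
  of fun a b => if f a = b then 1 else 0

/-- The indicator matrix of the fibres of `f` with its columns scaled to Euclidean norm `1`; the
column of an empty fibre is zero. -/
def normalizedIndicatorMatrix [Fintype α] [Fintype β] (f : α → β) : Matrix α β ℝ :=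
  indicatorMatrix ℝ f * diagonal fun b => (√(Finset.card {a | f a = b} : ℝ))⁻¹

theorem indicatorMatrix_mul {R : Type*} [NonAssocSemiring R] [Fintype β] (f : α → β)
    (M : Matrix β γ R) : indicatorMatrix R f * M = M.submatrix f id := by
  ext a c
  simp [indicatorMatrix, mul_apply]

theorem indicatorMatrix_transpose_mul_self {R : Type*} [NonAssocSemiring R] [Fintype α]
    (f : α → β) : (indicatorMatrix R f)ᵀ * indicatorMatrix R f
      = diagonal fun b => (Finset.card {a | f a = b} : R) := by
  ext b b'
  obtain rfl | hb := eq_or_ne b b'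
  · simp [indicatorMatrix, mul_apply, ← ite_and]
  · have disjoint_fibres (a : α) : ¬(f a = b' ∧ f a = b) := fun h => hb (h.2.symm.trans h.1)
    simp [indicatorMatrix, mul_apply, hb, ← ite_and, disjoint_fibres]

/-- The hypothesis `hAB` says that the fibres of `f` form an equitable partition for `A`, with
quotient matrix `B`. -/
theorem charpoly_normalizedIndicatorMatrix_compression [Fintype α] [Fintype β] {f : α → β}
    (hf : Function.Surjective f) {A : Matrix α α ℝ} {B : Matrix β β ℝ}
    (hAB : A * indicatorMatrix ℝ f = indicatorMatrix ℝ f * B) :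
    ((normalizedIndicatorMatrix f)ᵀ * A * normalizedIndicatorMatrix f).charpoly = B.charpoly := by
  set P := indicatorMatrix ℝ f
  let fibreCard (b : β) : ℝ := Finset.card {a | f a = b}
  let Δ : Matrix β β ℝ := diagonal fun b => (√(fibreCard b))⁻¹
  have fibreCard_pos (b : β) : 0 < fibreCard b := by
    obtain ⟨a, ha⟩ := hf b
    exact Nat.cast_pos.2 (Finset.card_pos.2 ⟨a, by simpa using ha⟩)
  have normalized : Δ * (Δ * diagonal fibreCard) = 1 := by
    rw [diagonal_mul_diagonal, diagonal_mul_diagonal, ← diagonal_one]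
    congr 1 with b
    rw [← mul_assoc, ← mul_inv, Real.mul_self_sqrt (fibreCard_pos b).le,
      inv_mul_cancel₀ (fibreCard_pos b).ne']
  calc ((P * Δ)ᵀ * A * (P * Δ)).charpoly
      = (Δ * Pᵀ * (A * P) * Δ).charpoly := by
        simp only [Δ, transpose_mul, diagonal_transpose, Matrix.mul_assoc]
    _ = (Δ * (Pᵀ * P) * B * Δ).charpoly := by
        rw [hAB]
        simp only [Matrix.mul_assoc]
    _ = (Δ * diagonal fibreCard * B * Δ).charpoly := by
        rw [indicatorMatrix_transpose_mul_self]
    _ = B.charpoly := by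
        rw [charpoly_mul_comm, ← Matrix.mul_assoc, normalized, Matrix.one_mul]

end IndicatorMatrix

section EndpointCount

variable (R : Type*) {V K γ : Type*}

/-- The matrix counting with multiplicity how often a vertex is an endpoint of an unordered pair:
it is the incidence matrix of the complete graph with loops, where a loop counts twice. -/
def endpointCount (V : Type*) [DecidableEq V] [AddCommMonoidWithOne R] : Matrix (Sym2 V) V R :=
  of fun z v => z.lift
    ⟨fun x y => (if x = v then 1 else 0) + (if y = v then 1 else 0), fun _ _ => add_comm _ _⟩

/-- The quotient of the transposed incidence matrix of the complete graph on `V` by the partition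
into the fibres of `c`: the `(r, b)` entry is the number of edges of the block `b` at a vertex of
the cluster `r`. The subtracted term removes the loop at that vertex. -/
def blockDegree [Fintype V] [DecidableEq K] [AddCommGroupWithOne R] (c : V → K) :
    Matrix K (Sym2 K) R :=
  of fun r b => (Finset.card {v | s(r, c v) = b} : R) - if s(r, r) = b then 1 else 0

variable {R}

theorem endpointCount_mk_apply [DecidableEq V] [AddCommMonoidWithOne R] (x y v : V) :
    endpointCount R V s(x, y) v = (if x = v then 1 else 0) + (if y = v then 1 else 0) := rfl

theorem endpointCount_apply_of_not_isDiag [DecidableEq V] [AddCommMonoidWithOne R] {z : Sym2 V}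
    (hz : ¬z.IsDiag) (v : V) : endpointCount R V z v = if v ∈ z then 1 else 0 := by
  induction z with | _ x y
  rw [Sym2.mk_isDiag_iff] at hz
  by_cases hx : x = v <;> by_cases hy : y = v <;> simp_all [endpointCount_mk_apply, eq_comm]

theorem endpointCount_mul_mk_apply [DecidableEq V] [NonAssocSemiring R] [Fintype V]
    (M : Matrix V γ R) (x y : V) (g : γ) :
    (endpointCount R V * M) s(x, y) g = M x g + M y g := by
  simp [mul_apply, endpointCount_mk_apply, add_mul, Finset.sum_add_distrib]

theorem endpointCount_mul_indicatorMatrix [DecidableEq V] [DecidableEq K] [NonAssocSemiring R]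
    [Fintype V] [Fintype K] (c : V → K) :
    endpointCount R V * indicatorMatrix R c
      = indicatorMatrix R (Sym2.map c) * endpointCount R K := by
  rw [indicatorMatrix_mul]
  ext z r
  induction z with | _ x y
  exact endpointCount_mul_mk_apply _ x y r

theorem blockDegree_mul_apply [DecidableEq K] [NonAssocRing R] [Fintype V] [Fintype K]
    (c : V → K) (M : Matrix (Sym2 K) γ R) (r : K) (g : γ) :
    (blockDegree R c * M) r g = ∑ v, M s(r, c v) g - M s(r, r) g := by
  simp only [mul_apply, blockDegree, of_apply, sub_mul, Finset.sum_sub_distrib,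
    Finset.natCast_card_filter, Finset.sum_mul]
  rw [Finset.sum_comm]
  simp

theorem blockDegree_mul_endpointCount [DecidableEq K] [Ring R] [Fintype V] [Fintype K]
    (c : V → K) :
    blockDegree R c * endpointCount R K
      = vecMulVec 1 (fun s => (Finset.card {v | c v = s} : R))
        + scalar K ((Fintype.card V : R) - 2) := by
  ext r s
  rw [blockDegree_mul_apply]
  simp only [endpointCount_mk_apply, Finset.sum_add_distrib, Finset.sum_const, Finset.card_univ,
    nsmul_eq_mul, ← Finset.natCast_card_filter, Matrix.add_apply, vecMulVec_apply, Pi.one_apply,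
    one_mul, scalar_apply, diagonal_apply]
  split_ifs
  · rw [mul_one, one_add_one_eq_two]
    abel
  · simp

open Polynomial in
theorem charpoly_endpointCount_mul_blockDegree [DecidableEq K] [CommRing R] [Fintype V]
    [Fintype K] [Nonempty K] (c : V → K) :
    (endpointCount R K * blockDegree R c).charpoly
      = X ^ (Fintype.card K).choose 2 * ((X - C (2 * (Fintype.card V : R) - 2))
          * (X - C ((Fintype.card V : R) - 2)) ^ (Fintype.card K - 1)) := by
  have card_sym2 : Fintype.card (Sym2 K) = (Fintype.card K).choose 2 + Fintype.card K := by
    rw [Sym2.card, Nat.choose_succ_succ', Nat.choose_one_right, add_comm]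
  have sum_card_fibres : ∑ r, (Finset.card {v | c v = r} : R) = Fintype.card V := by
    rw [← Nat.cast_sum, Finset.sum_card_fiberwise_eq_card_filter]
    simp
  rw [charpoly_mul_comm_of_le _ _ (card_sym2 ▸ Nat.le_add_left _ _),
    blockDegree_mul_endpointCount, charpoly_vecMulVec_add_scalar, one_dotProduct,
    sum_card_fibres, card_sym2, Nat.add_sub_cancel, ← add_sub_assoc, ← two_mul]

end EndpointCount

section LineGraph

/-- The edge-vertex incidence matrix of the complete graph `K_n`. -/
def edgeIncidence (n : ℕ) : Matrix (CompleteEdge n) (Fin n) ℝ :=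
  of fun e i => endpointCount ℝ (Fin n) e.1 i

theorem edgeIncidence_apply (e : CompleteEdge n) (i : Fin n) :
    edgeIncidence n e i = if i ∈ e.1 then 1 else 0 :=
  endpointCount_apply_of_not_isDiag e.2 i

theorem edgeIncidence_mul_apply {γ : Type*} (M : Matrix (Fin n) γ ℝ) (e : CompleteEdge n)
    (g : γ) : (edgeIncidence n * M) e g = (endpointCount ℝ (Fin n) * M) e.1 g := rfl

theorem ALK_eq_edgeIncidence_mul_transpose_sub_two :
    ALK n = edgeIncidence n * (edgeIncidence n)ᵀ - scalar (CompleteEdge n) 2 := by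
  ext e f
  obtain ⟨⟨a, b⟩, he : s(a, b) = e.1⟩ := Sym2.mk_surjective e.1
  have hab : a ≠ b := fun h => e.2 (he ▸ h)
  have common_endpoint : (∃ v, v ∈ e.1 ∧ v ∈ f.1) ↔ a ∈ f.1 ∨ b ∈ f.1 := by simp [← he]
  have same_edge : e = f ↔ a ∈ f.1 ∧ b ∈ f.1 := by
    rw [Sym2.mem_and_mem_iff hab, he, eq_comm]
    exact Subtype.ext_iff
  have gram_entry : (edgeIncidence n * (edgeIncidence n)ᵀ) e f
      = (if a ∈ f.1 then 1 else 0) + (if b ∈ f.1 then 1 else 0) := by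
    rw [edgeIncidence_mul_apply, ← he, endpointCount_mul_mk_apply]
    simp only [transpose_apply, edgeIncidence_apply]
  rw [Matrix.sub_apply, gram_entry]
  simp only [ALK, common_endpoint, ne_eq, scalar_apply, diagonal_apply, same_edge]
  by_cases ha : a ∈ f.1 <;> by_cases hb : b ∈ f.1 <;> norm_num [ha, hb]

theorem sum_incident_edges {A : Type*} [AddCommMonoid A] (i : Fin n) (F : Sym2 (Fin n) → A) :
    ∑ e : CompleteEdge n with i ∈ e.1, F e.1 = ∑ j with j ≠ i, F s(i, j) := by
  symm
  refine Finset.sum_bij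
    (fun j hj => ⟨s(i, j), fun hij => (Finset.mem_filter.1 hj).2 hij.symm⟩) ?_ ?_ ?_ ?_
  · intro j _
    exact Finset.mem_filter.2 ⟨Finset.mem_univ _, Sym2.mem_mk_left i j⟩
  · intro j _ j' _ h
    exact Sym2.congr_right.1 (congrArg Subtype.val h)
  · rintro ⟨z, hz⟩ he
    obtain ⟨j, rfl⟩ := (Finset.mem_filter.1 he).2
    exact ⟨j, by simpa [eq_comm] using hz, rfl⟩
  · simp

theorem edgeIncidence_transpose_mul_indicatorMatrix (c : Fin n → Fin k) :
    (edgeIncidence n)ᵀ * indicatorMatrix ℝ (blkOf c)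
      = indicatorMatrix ℝ c * blockDegree ℝ c := by
  rw [indicatorMatrix_mul]
  ext i b
  let F (z : Sym2 (Fin n)) : ℝ := indicatorMatrix ℝ (Sym2.map c) z b
  calc ((edgeIncidence n)ᵀ * indicatorMatrix ℝ (blkOf c)) i b
      = ∑ e : CompleteEdge n with i ∈ e.1, F e.1 := by
        simp only [mul_apply, transpose_apply, edgeIncidence_apply, ite_mul, one_mul, zero_mul,
          Finset.sum_filter]
        rfl
    _ = ∑ j, F s(i, j) - F s(i, i) := by
        rw [sum_incident_edges, Finset.filter_ne', Finset.sum_erase_eq_sub (Finset.mem_univ i)]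
    _ = blockDegree ℝ c (c i) b := by
        rw [blockDegree, of_apply, Finset.natCast_card_filter]
        rfl

theorem edgeIncidence_mul_indicatorMatrix (c : Fin n → Fin k) :
    edgeIncidence n * indicatorMatrix ℝ c
      = indicatorMatrix ℝ (blkOf c) * endpointCount ℝ (Fin k) := by
  ext e r
  rw [edgeIncidence_mul_apply, endpointCount_mul_indicatorMatrix]
  rfl

theorem ALK_mul_indicatorMatrix (c : Fin n → Fin k) :
    ALK n * indicatorMatrix ℝ (blkOf c) = indicatorMatrix ℝ (blkOf c)
      * (endpointCount ℝ (Fin k) * blockDegree ℝ c - scalar (Sym2 (Fin k)) 2) := by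
  rw [ALK_eq_edgeIncidence_mul_transpose_sub_two, Matrix.sub_mul, Matrix.mul_sub,
    Matrix.mul_assoc, edgeIncidence_transpose_mul_indicatorMatrix, ← Matrix.mul_assoc,
    edgeIncidence_mul_indicatorMatrix, Matrix.mul_assoc, scalar_apply, scalar_apply,
    ← smul_eq_diagonal_mul, ← smul_eq_mul_diagonal]

theorem blkOf_surjective {c : Fin n → Fin k} (hsz : ∀ r, 2 ≤ clusterSize c r) :
    Function.Surjective (blkOf c) := by
  intro b
  induction b with | _ r t
  obtain ⟨i, hi⟩ : ∃ i, c i = r := by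
    obtain ⟨i, hi⟩ := Finset.card_pos.1 (zero_lt_two.trans_le (hsz r))
    exact ⟨i, by simpa using hi⟩
  obtain ⟨j, hj, hji⟩ : ∃ j, c j = t ∧ j ≠ i := by
    obtain ⟨j, hj, hji⟩ := Finset.exists_mem_ne (hsz t) i
    exact ⟨j, by simpa using hj, hji⟩
  exact ⟨⟨s(i, j), hji.symm⟩, by simp [blkOf, hi, hj]⟩

theorem Qmat_eq_normalizedIndicatorMatrix (c : Fin n → Fin k) :
    Qmat c = normalizedIndicatorMatrix (blkOf c) := by
  ext e b
  simp [Qmat, normalizedIndicatorMatrix, indicatorMatrix, blkSize]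

end LineGraph

open Polynomial in
/-- For a partition of `[n]` into `k ≥ 1` clusters each of size at least `2`,
the matrix `M = Qᵀ A(L(K_n)) Q` has characteristic polynomial
`(X − (2n−4)) · (X − (n−4))^{k−1} · (X + 2)^{C(k,2)}`; that is, its eigenvalues are `2n−4`
(simple), `n−4` with multiplicity `k−1`, and `−2` with multiplicity `C(k,2)`. -/
theorem Mmat_charpoly {n k : ℕ} (hk : 1 ≤ k) (c : Fin n → Fin k)
    (hsz : ∀ r, 2 ≤ clusterSize c r) :
    (Mmat c).charpoly
      = (X - C (2 * (n : ℝ) - 4)) * (X - C ((n : ℝ) - 4)) ^ (k - 1)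
          * (X + C 2) ^ (k.choose 2) := by
  have : Nonempty (Fin k) := ⟨⟨0, hk⟩⟩
  rw [Mmat, Qmat_eq_normalizedIndicatorMatrix, charpoly_normalizedIndicatorMatrix_compression
    (blkOf_surjective hsz) (ALK_mul_indicatorMatrix c), charpoly_sub_scalar,
    charpoly_endpointCount_mul_blockDegree, Fintype.card_fin, Fintype.card_fin]
  simp only [mul_comp, pow_comp, sub_comp, X_comp, C_comp, map_sub, map_ofNat, ofNat_comp]
  ring
end
end

section
/- Let [n] be partitioned into clusters C_1,…,C_k with |C_r| ≥ 2, and let Z ∈ M_{n,k}({0,1}) be the corresponding membership matrix (exactly one 1 per row, Z_{i,r} = 1 iff i ∈ C_r). Let C̃_1,…,C̃_{k'} be another partition of [n] with all parts of size ≥ 2, and let Q̃ be the block-indicator matrix of its induced edge partition. For a symmetric matrix B ∈ M_k([0,1]), set 𝒫 = Z B Zᵀ and let R(B) be the C(n,2)×C(n,2) diagonal matrix with entries R(B)_{{i,j},{i,j}} = 𝒫_{i,j}. Then the following are equivalent: (a) for every symmetric B ∈ M_k([0,1]) there exists a diagonal matrix D with R(B) Q̃ = Q̃ D; (b) the partition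 C̃_1,…,C̃_{k'} is a refinement of C_1,…,C_k, i.e., for every i there exists j with C̃_i ⊆ C_j. Moreover, when (b) holds, the range of Q̃ is an invariant subspace of R(B) A(L(K_n)) R(B) for every such B. -/
open scoped Classical
open Matrix

noncomputable section

variable {n k : ℕ}

/-- The value of a symmetric `k × k` matrix `B` on an unordered pair of indices
(for symmetric `B` this sends `s(r,s)` to `B r s`). -/
def symVal {k : ℕ} (B : Matrix (Fin k) (Fin k) ℝ) : Sym2 (Fin k) → ℝ :=
  Sym2.lift ⟨fun r s => (B r s + B s r) / 2, fun r s => by ring⟩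

/-- The diagonal matrix `R(B)` of order `C(n,2)` whose entry at the edge `{i,j}` is
`𝒫_{i,j} = B_{c(i), c(j)}` (the entry of `𝒫 = Z B Zᵀ`). -/
def Rmat {n k : ℕ} (c : Fin n → Fin k) (B : Matrix (Fin k) (Fin k) ℝ) :
    Matrix (CompleteEdge n) (CompleteEdge n) ℝ :=
  Matrix.diagonal (fun e => symVal B (blkOf c e))

/-!
A matrix is of the form `Q̃ N` exactly when its rows are constant on the blocks of `C̃`, and
`R(B) Q̃ = Q̃ D` says that the diagonal of `R(B)` is constant on these blocks.  The indicators of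
single blocks of `C` are among the admissible `B`, so (a) says that the edge partition of `C̃`
refines that of `C`.  Comparing the edges `{u, w}` and `{v, w}`, with `u` and `v` in one part of
`C̃` and `w` a third vertex, brings this refinement down to the vertices.  For the invariance, the
vertex permutations that preserve the parts of `C̃` are automorphisms of `L(K_n)` and act
transitively on each block, so the rows of `A(L(K_n)) Q̃` are constant on the blocks.
-/

theorem factorsThrough_iff_forall_exists {α β γ : Type*} {f : α → β} {g : α → γ}
    (hg : g.Surjective) :
    f.FactorsThrough g ↔ ∀ i, ∃ j, ∀ a, g a = i → f a = j := by
  refine ⟨fun h i => ?_, fun h a b hab => ?_⟩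
  · obtain ⟨a, rfl⟩ := hg i
    exact ⟨f a, fun b hb => h hb⟩
  · obtain ⟨j, hj⟩ := h (g b)
    rw [hj a hab, hj b rfl]

theorem exists_perm_comp_eq_of_pair {α β : Type*} (f : α → β) {i j i' j' : α}
    (hij : i ≠ j) (hij' : i' ≠ j') (hi : f i = f i') (hj : f j = f j') :
    ∃ σ : Equiv.Perm α, f ∘ σ = f ∧ σ i = i' ∧ σ j = j' := by
  set τ := Equiv.swap i i'
  have hτ : ∀ v, f (τ v) = f v := Equiv.apply_swap_eq_self hi
  have hτj : i' ≠ τ j := fun h =>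
    hij (τ.injective ((Equiv.swap_apply_left i i').trans h))
  refine ⟨τ.trans (Equiv.swap (τ j) j'), funext fun v => ?_, ?_, ?_⟩
  · exact (Equiv.apply_swap_eq_self ((hτ j).trans hj) (τ v)).trans (hτ v)
  · rw [Equiv.trans_apply, Equiv.swap_apply_left, Equiv.swap_apply_of_ne_of_ne hτj hij']
  · rw [Equiv.trans_apply, Equiv.swap_apply_left]

theorem mul_mul_eq_mul_mul_of_intertwine {ι β R : Type*} [Fintype ι] [Fintype β]
    [NonUnitalSemiring R] {A A' : Matrix ι ι R} {Q : Matrix ι β R} {N N' : Matrix β β R}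
    (h : A * Q = Q * N) (h' : A' * Q = Q * N') : A * A' * Q = Q * (N * N') := by
  rw [Matrix.mul_assoc, h', ← Matrix.mul_assoc, h, Matrix.mul_assoc]

section FiberMatrix

variable {ι β γ K : Type*} [DecidableEq β] {p : ι → β} {w : β → K}

/-- The matrix whose column `b` is `w b` times the indicator vector of the fiber of `p` over `b`.
The block-indicator matrix `Qmat c` is the case where `p` sends an edge to its block and `w` is the
normalization. -/
def fiberMatrix [Zero K] (p : ι → β) (w : β → K) : Matrix ι β K :=
  of fun i b => if p i = b then w b else 0

theorem fiberMatrix_mul_apply [Fintype β] [NonUnitalNonAssocSemiring K] (N : Matrix β γ K)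
    (i : ι) (x : γ) : (fiberMatrix p w * N) i x = w (p i) * N (p i) x := by
  simp [Matrix.mul_apply, fiberMatrix]

theorem exists_eq_fiberMatrix_mul [Fintype β] [DivisionSemiring K] (hw : ∀ i, w (p i) ≠ 0)
    {X : Matrix ι γ K} (hX : X.row.FactorsThrough p) :
    ∃ N : Matrix β γ K, X = fiberMatrix p w * N := by
  obtain ⟨Y, hY⟩ := (Function.factorsThrough_iff X.row).mp hX
  refine ⟨of fun b x => (w b)⁻¹ * Y b x, ?_⟩
  ext i x
  rw [fiberMatrix_mul_apply, of_apply, mul_inv_cancel_left₀ (hw i)]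
  exact congrFun (congrFun hY i) x

theorem diagonal_mul_fiberMatrix_eq_iff [Fintype ι] [DecidableEq ι] [Fintype β]
    [CommSemiring K] [IsCancelMulZero K] (hw : ∀ i, w (p i) ≠ 0) {d : ι → K} {D : β → K} :
    diagonal d * fiberMatrix p w = fiberMatrix p w * diagonal D ↔ d = D ∘ p := by
  refine ⟨fun h => funext fun i => ?_, ?_⟩
  · have hi := congrFun (congrFun h i) (p i)
    rw [diagonal_mul, mul_diagonal, mul_comm] at hi
    exact mul_left_cancel₀ (by simpa [fiberMatrix] using hw i) hi
  · rintro rfl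
    ext i b
    by_cases hb : p i = b
    · subst hb
      simp [fiberMatrix, mul_comm]
    · simp [fiberMatrix, hb]

theorem exists_diagonal_mul_fiberMatrix_eq_iff [Fintype ι] [DecidableEq ι] [Fintype β]
    [CommSemiring K] [IsCancelMulZero K] (hw : ∀ i, w (p i) ≠ 0) {d : ι → K} :
    (∃ D : β → K, diagonal d * fiberMatrix p w = fiberMatrix p w * diagonal D) ↔
      d.FactorsThrough p := by
  simp only [diagonal_mul_fiberMatrix_eq_iff hw, Function.factorsThrough_iff]

theorem row_mul_fiberMatrix_factorsThrough [Fintype ι] [NonUnitalNonAssocSemiring K]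
    {A : Matrix ι ι K}
    (hA : ∀ i j, p i = p j → ∃ σ : Equiv.Perm ι, A.submatrix σ σ = A ∧ p ∘ σ = p ∧ σ i = j) :
    (A * fiberMatrix p w).row.FactorsThrough p := by
  intro i j hij
  obtain ⟨σ, hAσ, hpσ, rfl⟩ := hA i j hij
  have hQσ : (fiberMatrix p w).submatrix σ id = fiberMatrix p w := by
    ext e b
    simp only [submatrix_apply, fiberMatrix, of_apply, id, ← Function.comp_apply (f := p), hpσ]
  have hAQσ : (A * fiberMatrix p w).submatrix σ id = A * fiberMatrix p w := by
    rw [← submatrix_mul_equiv A (fiberMatrix p w) σ σ id, hAσ, hQσ]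
  exact (congrFun hAQσ i).symm

end FiberMatrix

/-- The permutation of the edges of `K_n` induced by a permutation of its vertices, as a source of
automorphisms of `L(K_n)`. -/
def edgePerm (σ : Equiv.Perm (Fin n)) : Equiv.Perm (CompleteEdge n) where
  toFun e := ⟨e.1.map σ, (Sym2.isDiag_map σ.injective).not.mpr e.2⟩
  invFun e := ⟨e.1.map σ.symm, (Sym2.isDiag_map σ.symm.injective).not.mpr e.2⟩
  left_inv e := Subtype.ext (by simp [Sym2.map_map])
  right_inv e := Subtype.ext (by simp [Sym2.map_map])

theorem coe_edgePerm_apply (σ : Equiv.Perm (Fin n)) (e : CompleteEdge n) :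
    (edgePerm σ e).1 = e.1.map σ := rfl

theorem ALK_submatrix_edgePerm (σ : Equiv.Perm (Fin n)) :
    (ALK n).submatrix (edgePerm σ) (edgePerm σ) = ALK n := by
  ext e f
  have h_common : (∃ v, v ∈ (edgePerm σ e).1 ∧ v ∈ (edgePerm σ f).1) ↔
      ∃ v, v ∈ e.1 ∧ v ∈ f.1 := by
    rw [σ.surjective.exists]
    simp only [coe_edgePerm_apply, Sym2.mem_map, σ.injective.eq_iff, exists_eq_right]
  simp only [submatrix_apply, ALK, h_common, ne_eq, (edgePerm σ).injective.eq_iff]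

theorem blkOf_comp_edgePerm {c : Fin n → Fin k} {σ : Equiv.Perm (Fin n)} (hσ : c ∘ σ = c) :
    blkOf c ∘ edgePerm σ = blkOf c := by
  funext e
  rw [Function.comp_apply, blkOf, coe_edgePerm_apply, Sym2.map_map, hσ, blkOf]

theorem exists_edgePerm_eq_of_blkOf_eq {c : Fin n → Fin k} {e f : CompleteEdge n}
    (h : blkOf c e = blkOf c f) : ∃ σ : Equiv.Perm (Fin n), c ∘ σ = c ∧ edgePerm σ e = f := by
  obtain ⟨⟨i, j⟩, hij⟩ := e
  obtain ⟨⟨x, y⟩, hxy⟩ := f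
  rcases Sym2.eq_iff.mp h with ⟨hi, hj⟩ | ⟨hi, hj⟩
  · obtain ⟨σ, hσ, rfl, rfl⟩ := exists_perm_comp_eq_of_pair c hij hxy hi hj
    exact ⟨σ, hσ, rfl⟩
  · obtain ⟨σ, hσ, rfl, rfl⟩ := exists_perm_comp_eq_of_pair c hij (Ne.symm hxy) hi hj
    exact ⟨σ, hσ, Subtype.ext Sym2.eq_swap⟩

theorem one_div_sqrt_blkSize_blkOf_ne_zero (c : Fin n → Fin k) (e : CompleteEdge n) :
    1 / √(blkSize c (blkOf c e) : ℝ) ≠ 0 := by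
  have h_pos : 0 < blkSize c (blkOf c e) := Finset.card_pos.mpr ⟨e, by simp⟩
  positivity

theorem Qmat_eq_fiberMatrix (c : Fin n → Fin k) :
    Qmat c = fiberMatrix (blkOf c) fun b => 1 / √(blkSize c b : ℝ) := rfl

theorem exists_Rmat_mul_Qmat_eq_iff {k' : ℕ} (c : Fin n → Fin k) (c' : Fin n → Fin k')
    (B : Matrix (Fin k) (Fin k) ℝ) :
    (∃ D : Sym2 (Fin k') → ℝ, Rmat c B * Qmat c' = Qmat c' * diagonal D) ↔
      (symVal B ∘ blkOf c).FactorsThrough (blkOf c') := by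
  rw [Qmat_eq_fiberMatrix]
  exact exists_diagonal_mul_fiberMatrix_eq_iff (p := blkOf c')
    (one_div_sqrt_blkSize_blkOf_ne_zero c')

theorem exists_ALK_mul_Qmat_eq (c : Fin n → Fin k) :
    ∃ N : Matrix (Sym2 (Fin k)) (Sym2 (Fin k)) ℝ, ALK n * Qmat c = Qmat c * N := by
  rw [Qmat_eq_fiberMatrix]
  refine exists_eq_fiberMatrix_mul (p := blkOf c) (one_div_sqrt_blkSize_blkOf_ne_zero c)
    (row_mul_fiberMatrix_factorsThrough fun e f hef => ?_)
  obtain ⟨σ, hcσ, hσe⟩ := exists_edgePerm_eq_of_blkOf_eq hef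
  exact ⟨edgePerm σ, ALK_submatrix_edgePerm σ, blkOf_comp_edgePerm hcσ, hσe⟩

/-- The symmetric `0`-`1` matrix supported on a single unordered pair `b` of indices; as a matrix
`B` of connection probabilities it makes `symVal B` the indicator function of `b`. -/
def pairIndicator (b : Sym2 (Fin k)) : Matrix (Fin k) (Fin k) ℝ :=
  of fun r s => if s(r, s) = b then 1 else 0

theorem pairIndicator_transpose (b : Sym2 (Fin k)) : (pairIndicator b)ᵀ = pairIndicator b := by
  ext r s
  simp only [transpose_apply, pairIndicator, of_apply, Sym2.eq_swap]

theorem pairIndicator_mem_Icc (b : Sym2 (Fin k)) (r s : Fin k) :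
    pairIndicator b r s ∈ Set.Icc (0 : ℝ) 1 := by
  rw [pairIndicator, of_apply]
  split_ifs <;> simp

theorem symVal_pairIndicator (b x : Sym2 (Fin k)) :
    symVal (pairIndicator b) x = if x = b then 1 else 0 := by
  induction x with | _ r s
  simp only [symVal, Sym2.lift_mk, pairIndicator, of_apply, Sym2.eq_swap (a := s),
    add_self_div_two]

theorem forall_symVal_comp_factorsThrough_iff {α β : Type*} {f : α → Sym2 (Fin k)} {g : α → β} :
    (∀ B : Matrix (Fin k) (Fin k) ℝ, Bᵀ = B → (∀ r s, B r s ∈ Set.Icc (0 : ℝ) 1) →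
      (symVal B ∘ f).FactorsThrough g) ↔ f.FactorsThrough g := by
  refine ⟨fun h a b hab => ?_, fun h B _ _ => h.comp_left _⟩
  have h_ind := h (pairIndicator (f b)) (pairIndicator_transpose _) (pairIndicator_mem_Icc _) hab
  simpa [symVal_pairIndicator] using h_ind

section Refinement

variable {k' : ℕ} {c : Fin n → Fin k} {c' : Fin n → Fin k'}

theorem blkOf_factorsThrough_blkOf (h : c.FactorsThrough c') :
    (blkOf c).FactorsThrough (blkOf c') := by
  rintro ⟨⟨i, j⟩, _⟩ ⟨⟨x, y⟩, _⟩ hblk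
  exact Sym2.eq_iff.mpr <| (Sym2.eq_iff.mp hblk).imp (And.imp (@h _ _) (@h _ _))
    (And.imp (@h _ _) (@h _ _))

theorem factorsThrough_of_blkOf_factorsThrough_blkOf (hn : n = 2 → k ≤ 1)
    (h : (blkOf c).FactorsThrough (blkOf c')) : c.FactorsThrough c' := by
  intro u v huv
  by_contra hne
  have hn_gt : 2 < n := by
    have huv_ne : u.1 ≠ v.1 := fun huv_eq => hne (congrArg c (Fin.ext huv_eq))
    have hcuv_ne : (c u).1 ≠ (c v).1 := Fin.val_ne_of_ne hne
    lia
  obtain ⟨w, hwu, hwv⟩ := Fin.exists_ne_and_ne_of_two_lt u v hn_gt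
  have hblk : s(c u, c w) = s(c v, c w) :=
    h (a := ⟨s(u, w), hwu.symm⟩) (b := ⟨s(v, w), hwv.symm⟩) (congrArg (s(·, c' w)) huv)
  exact hne (Sym2.congr_left.mp hblk)

theorem forall_exists_Rmat_mul_Qmat_eq_iff (hn : n = 2 → k ≤ 1) :
    (∀ B : Matrix (Fin k) (Fin k) ℝ, Bᵀ = B → (∀ r s, B r s ∈ Set.Icc (0 : ℝ) 1) →
      ∃ D : Sym2 (Fin k') → ℝ, Rmat c B * Qmat c' = Qmat c' * diagonal D) ↔
    c.FactorsThrough c' := by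
  simp only [exists_Rmat_mul_Qmat_eq_iff]
  exact forall_symVal_comp_factorsThrough_iff.trans
    ⟨factorsThrough_of_blkOf_factorsThrough_blkOf hn, blkOf_factorsThrough_blkOf⟩

theorem exists_Rmat_mul_ALK_mul_Rmat_mul_Qmat_eq (h : c.FactorsThrough c')
    (B : Matrix (Fin k) (Fin k) ℝ) :
    ∃ N : Matrix (Sym2 (Fin k')) (Sym2 (Fin k')) ℝ,
      Rmat c B * ALK n * Rmat c B * Qmat c' = Qmat c' * N := by
  obtain ⟨D, hD⟩ := (exists_Rmat_mul_Qmat_eq_iff c c' B).mpr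
    ((blkOf_factorsThrough_blkOf h).comp_left _)
  obtain ⟨N, hN⟩ := exists_ALK_mul_Qmat_eq c'
  exact ⟨_, mul_mul_eq_mul_mul_of_intertwine (mul_mul_eq_mul_mul_of_intertwine hD hN) hD⟩

theorem surjective_of_clusterSize_pos (h : ∀ r, 0 < clusterSize c r) : c.Surjective := by
  intro r
  obtain ⟨v, hv⟩ := Finset.card_pos.mp (h r)
  exact ⟨v, (Finset.mem_filter.mp hv).2⟩

theorem mul_le_of_forall_le_clusterSize {m : ℕ} (h : ∀ r, m ≤ clusterSize c r) : m * k ≤ n := by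
  simpa using Finset.mul_card_image_le_card_of_maps_to (s := Finset.univ)
    (fun v _ => Finset.mem_univ (c v)) m fun r _ => h r

end Refinement

theorem refinement_iff_diagonal_intertwine_general {n k k' : ℕ} (hn : n = 2 → k ≤ 1)
    (c : Fin n → Fin k) (c' : Fin n → Fin k') (hc' : c'.Surjective) :
    ((∀ B : Matrix (Fin k) (Fin k) ℝ, Bᵀ = B → (∀ r s, B r s ∈ Set.Icc (0 : ℝ) 1) →
        ∃ D : Sym2 (Fin k') → ℝ, Rmat c B * Qmat c' = Qmat c' * Matrix.diagonal D) ↔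
      (∀ i : Fin k', ∃ j : Fin k, ∀ v, c' v = i → c v = j)) ∧
    ((∀ i : Fin k', ∃ j : Fin k, ∀ v, c' v = i → c v = j) →
      ∀ B : Matrix (Fin k) (Fin k) ℝ,
        ∃ N : Matrix (Sym2 (Fin k')) (Sym2 (Fin k')) ℝ,
          (Rmat c B * ALK n * Rmat c B) * Qmat c' = Qmat c' * N) := by
  simp only [← factorsThrough_iff_forall_exists hc']
  exact ⟨forall_exists_Rmat_mul_Qmat_eq_iff hn, exists_Rmat_mul_ALK_mul_Rmat_mul_Qmat_eq⟩

/-- Let `[n]` be partitioned into clusters `C_1, …, C_k` (sizes ≥ 2) with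
cluster map `c`, and let `C̃_1, …, C̃_{k'}` be another partition (sizes ≥ 2) with cluster
map `c'` and block-indicator matrix `Q̃`.  The following are equivalent:
(a) for every symmetric `B ∈ M_k([0,1])` there is a diagonal matrix `D` with
`R(B) Q̃ = Q̃ D`; (b) the partition `C̃` refines `C`.  Moreover, when (b) holds, the range
of `Q̃` is an invariant subspace of `R(B) A(L(K_n)) R(B)` for every such `B`. -/
theorem refinement_iff_diagonal_intertwine {n k k' : ℕ}
    (c : Fin n → Fin k) (hsz : ∀ r, 2 ≤ clusterSize c r)
    (c' : Fin n → Fin k') (hsz' : ∀ r, 2 ≤ clusterSize c' r) :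
    ((∀ B : Matrix (Fin k) (Fin k) ℝ, Bᵀ = B → (∀ r s, B r s ∈ Set.Icc (0:ℝ) 1) →
        ∃ D : Sym2 (Fin k') → ℝ, Rmat c B * Qmat c' = Qmat c' * Matrix.diagonal D) ↔
      (∀ i : Fin k', ∃ j : Fin k, ∀ v, c' v = i → c v = j)) ∧
    ((∀ i : Fin k', ∃ j : Fin k, ∀ v, c' v = i → c v = j) →
      ∀ B : Matrix (Fin k) (Fin k) ℝ, Bᵀ = B → (∀ r s, B r s ∈ Set.Icc (0:ℝ) 1) →
        ∃ N : Matrix (Sym2 (Fin k')) (Sym2 (Fin k')) ℝ,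
          (Rmat c B * ALK n * Rmat c B) * Qmat c' = Qmat c' * N) := by
  have hkn := mul_le_of_forall_le_clusterSize hsz
  have hc' := surjective_of_clusterSize_pos fun r => two_pos.trans_le (hsz' r)
  exact (refinement_iff_diagonal_intertwine_general (by lia) c c' hc').imp_right
    fun h href B _ _ => h href B
end
end

section
/- Let n, m be nonnegative integers with m + n ≥ 1, p ∈ [0,1], let X ~ Binomial(n,p) and Y ~ Binomial(m,p) be independent, and let Z = X/√(X+Y), with the convention Z = 0 when X + Y = 0. Then E[Z] = (n/(m+n)) · E[√T], where T ~ Binomial(m+n, p). Equivalently, ∑_{j=0}^{n} ∑_{k=0}^{m} C(n,j)·C(m,k)·(j/√(j+k))·p^{j+k}·(1−p)^{m+n−j−k} = (n/(m+n)) · ∑_{t=0}^{m+n} C(m+n,t)·√t·p^t·(1−p)^{m+n−t}. -/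
open MeasureTheory ProbabilityTheory

noncomputable section

/-!
Size-biasing a binomial law lowers its number of trials by one and shifts it by one:
`E[X f(X)] = n p E[f(X' + 1)]` with `X' ~ Bin(n - 1, p)`. Applied to `X` with `Y` fixed, this gives
`E[X f(X + Y)] = n p E[f(X' + Y + 1)]`, where `X' + Y ~ Bin(m + n - 1, p)`. Applied to
`T ~ Bin(m + n, p)`, it gives `E[T f(T)] = (m + n) p E[f(X' + Y + 1)]`. Comparing the two, every
weight `f` satisfies `(m + n) E[X f(X + Y)] = n E[T f(T)]`, and the theorem is the case
`f t = 1 / √t`.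
-/

open Finset.HasAntidiagonal (antidiagonal mem_antidiagonal)
open scoped unitInterval

section Convolution

lemma conv_real_singleton {M : Type*} [AddMonoid M] [Finset.HasAntidiagonal M]
    [MeasurableSpace M] [MeasurableSingletonClass M] [MeasurableAdd₂ M]
    (μ ν : Measure M) [IsFiniteMeasure μ] [IsFiniteMeasure ν] (t : M) :
    (μ ∗ ν).real {t} = ∑ x ∈ antidiagonal t, μ.real {x.1} * ν.real {x.2} := by
  have preimage_eq : (fun x : M × M ↦ x.1 + x.2) ⁻¹' {t} = antidiagonal t := by
    ext x
    simp
  rw [Measure.conv, map_measureReal_apply measurable_add (measurableSet_singleton t), preimage_eq,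
    ← sum_measureReal_singleton]
  refine Finset.sum_congr rfl fun x _ ↦ ?_
  rw [← measureReal_prod_prod, Set.singleton_prod_singleton]

lemma choose_mul_pow_mul_choose_mul_pow {R : Type*} [CommSemiring R] (a b : R) (m n j k : ℕ) :
    (m.choose j * a ^ j * b ^ (m - j)) * (n.choose k * a ^ k * b ^ (n - k)) =
      (m.choose j * n.choose k) * (a ^ (j + k) * b ^ (m + n - (j + k))) := by
  rcases lt_or_ge m j with hj | hj
  · simp [Nat.choose_eq_zero_of_lt hj]
  rcases lt_or_ge n k with hk | hk
  · simp [Nat.choose_eq_zero_of_lt hk]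
  rw [show m + n - (j + k) = (m - j) + (n - k) by omega]
  ring

lemma binomial_conv_binomial (m n : ℕ) (p : I) : Bin(m, p) ∗ Bin(n, p) = Bin(m + n, p) := by
  refine Measure.ext_of_measureReal_singleton fun t ↦ ?_
  calc (Bin(m, p) ∗ Bin(n, p)).real {t}
      = ∑ x ∈ antidiagonal t,
          (m.choose x.1 * n.choose x.2 : ℝ) * (p ^ t * (1 - p) ^ (m + n - t)) := by
        rw [conv_real_singleton]
        refine Finset.sum_congr rfl fun x hx ↦ ?_
        rw [binomial_real_singleton, binomial_real_singleton, choose_mul_pow_mul_choose_mul_pow,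
          mem_antidiagonal.mp hx]
    _ = Bin(m + n, p).real {t} := by
        rw [← Finset.sum_mul, binomial_real_singleton, Nat.add_choose_eq]
        push_cast
        ring

end Convolution

section SizeBias

variable {E : Type*} [NormedAddCommGroup E] [NormedSpace ℝ E] [CompleteSpace E]

lemma integral_smul_binomial_succ (n : ℕ) (p : I) (f : ℕ → E) :
    ∫ x, (x : ℝ) • f x ∂Bin(n + 1, p) = ((n + 1 : ℝ) * p) • ∫ x, f (x + 1) ∂Bin(n, p) := by
  have weight_succ (k : ℕ) :
      ((n + 1).choose (k + 1) * (p : ℝ) ^ (k + 1) * (1 - p) ^ (n - k)) * (k + 1) =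
        ((n + 1) * p) * (n.choose k * p ^ k * (1 - p) ^ (n - k)) := by
    have absorption : ((n + 1 : ℝ) * n.choose k) = (n + 1).choose (k + 1) * (k + 1) := by
      exact_mod_cast Nat.add_one_mul_choose_eq n k
    linear_combination (-(p : ℝ) ^ (k + 1) * (1 - p) ^ (n - k)) * absorption
  simp only [integral_binomial, ← Nat.range_succ_eq_Iic]
  rw [Finset.sum_range_succ', Finset.smul_sum]
  simp [smul_smul, weight_succ]

lemma integrable_binomial_prod_binomial {F : Type*} [NormedAddCommGroup F] (m n : ℕ) (p q : I)
    (f : ℕ × ℕ → F) : Integrable f (Bin(m, p).prod Bin(n, q)) :=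
  (integrable_prod_iff StronglyMeasurable.of_discrete.aestronglyMeasurable).mpr
    ⟨.of_forall fun _ ↦ integrable_binomial _, integrable_binomial _⟩

lemma integral_fst_smul_add_binomial_prod_binomial_succ (m n : ℕ) (p : I) (f : ℕ → E) :
    ∫ z, (z.1 : ℝ) • f (z.1 + z.2) ∂(Bin(n + 1, p).prod Bin(m, p)) =
      ((n + 1 : ℝ) * p) • ∫ t, f (t + 1) ∂Bin(m + n, p) := by
  calc ∫ z, (z.1 : ℝ) • f (z.1 + z.2) ∂(Bin(n + 1, p).prod Bin(m, p))
      = ∫ y, ∫ x, (x : ℝ) • f (x + y) ∂Bin(n + 1, p) ∂Bin(m, p) :=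
        integral_prod_symm _ (integrable_binomial_prod_binomial ..)
    _ = ∫ y, ((n + 1 : ℝ) * p) • ∫ x, f (x + 1 + y) ∂Bin(n, p) ∂Bin(m, p) :=
        integral_congr_ae <| .of_forall fun y ↦ integral_smul_binomial_succ n p fun x ↦ f (x + y)
    _ = ((n + 1 : ℝ) * p) • ∫ y, ∫ x, f (y + x + 1) ∂Bin(n, p) ∂Bin(m, p) := by
        simp only [integral_smul, add_comm (_ + 1), add_assoc]
    _ = ((n + 1 : ℝ) * p) • ∫ t, f (t + 1) ∂Bin(m + n, p) := by
        rw [← binomial_conv_binomial, integral_conv]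
        exact binomial_conv_binomial m n p ▸ integrable_binomial _

lemma add_smul_integral_fst_smul_add_binomial_prod_binomial (m n : ℕ) (p : I) (f : ℕ → E) :
    (m + n : ℝ) • ∫ z, (z.1 : ℝ) • f (z.1 + z.2) ∂(Bin(n, p).prod Bin(m, p)) =
      (n : ℝ) • ∫ t, (t : ℝ) • f t ∂Bin(m + n, p) := by
  cases n with
  | zero =>
    rw [integral_prod _ (integrable_binomial_prod_binomial ..)]
    simp [binomial_zero]
  | succ n =>
    rw [integral_fst_smul_add_binomial_prod_binomial_succ, ← add_assoc m n 1,
      integral_smul_binomial_succ, smul_smul, smul_smul]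
    push_cast
    congr 1
    ring

end SizeBias

section RandomVariables

variable {Ω : Type*} [MeasurableSpace Ω] {P : Measure Ω} {X Y : Ω → ℕ} {m n : ℕ} {p : I}

lemma hasLaw_binomial_of_measure_eq (hX : AEMeasurable X P)
    (hlaw : ∀ j : ℕ, P {ω | X ω = j} =
      ENNReal.ofReal ((n.choose j : ℝ) * p ^ j * (1 - p) ^ (n - j))) :
    HasLaw X Bin(n, p) P where
  aemeasurable := hX
  map_eq := Measure.ext_of_singleton fun j ↦ by
    rw [Measure.map_apply_of_aemeasurable hX (measurableSet_singleton j), binomial_singleton]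
    exact hlaw j

theorem dampedBinomial_first_moment_general {E : Type*} [NormedAddCommGroup E] [NormedSpace ℝ E]
    [CompleteSpace E] (hnm : 1 ≤ m + n) (hX : HasLaw X Bin(n, p) P) (hY : HasLaw Y Bin(m, p) P)
    (hind : IndepFun X Y P) (f : ℕ → E) :
    ∫ ω, (X ω : ℝ) • f (X ω + Y ω) ∂P =
      ((n : ℝ) / (m + n)) • ∫ t, (t : ℝ) • f t ∂Bin(m + n, p) := by
  have : IsFiniteMeasure P := hX.isFiniteMeasure
  have hmn : (m + n : ℝ) ≠ 0 := by exact_mod_cast Nat.one_le_iff_ne_zero.mp hnm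
  have integral_eq : ∫ ω, (X ω : ℝ) • f (X ω + Y ω) ∂P =
      ∫ z, (z.1 : ℝ) • f (z.1 + z.2) ∂(Bin(n, p).prod Bin(m, p)) :=
    (hind.hasLaw_prod hX hY).integral_comp
      (f := fun z : ℕ × ℕ ↦ (z.1 : ℝ) • f (z.1 + z.2))
      (integrable_binomial_prod_binomial ..).aestronglyMeasurable
  rw [integral_eq, div_eq_inv_mul, mul_smul,
    ← add_smul_integral_fst_smul_add_binomial_prod_binomial, inv_smul_smul₀ hmn]

end RandomVariables

/-- Let `X ~ Binomial(n,p)` and `Y ~ Binomial(m,p)` be independent and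
`Z = X/√(X+Y)` (with `Z = 0` when `X+Y = 0`).  Then
`E[Z] = (n/(m+n)) · E[√T]` with `T ~ Binomial(m+n,p)`, i.e.
`E[Z] = (n/(m+n)) · ∑_{t=0}^{m+n} C(m+n,t) √t p^t (1−p)^{m+n−t}`. -/
theorem dampedBinomial_first_moment (n m : ℕ) (hnm : 1 ≤ m + n) (p : ℝ)
    (hp : p ∈ Set.Icc (0 : ℝ) 1)
    (Ω : Type) [MeasurableSpace Ω] (Pr : Measure Ω) [IsProbabilityMeasure Pr]
    (X Y : Ω → ℕ) (hX : Measurable X) (hY : Measurable Y)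
    (hind : IndepFun X Y Pr)
    (hlawX : ∀ j : ℕ, Pr {ω | X ω = j}
      = ENNReal.ofReal ((n.choose j : ℝ) * p ^ j * (1 - p) ^ (n - j)))
    (hlawY : ∀ j : ℕ, Pr {ω | Y ω = j}
      = ENNReal.ofReal ((m.choose j : ℝ) * p ^ j * (1 - p) ^ (m - j))) :
    ∫ ω, ((X ω : ℝ) / Real.sqrt ((X ω : ℝ) + (Y ω : ℝ))) ∂Pr
      = ((n : ℝ) / ((m : ℝ) + (n : ℝ))) *
        ∑ t ∈ Finset.range (m + n + 1),
          ((m + n).choose t : ℝ) * Real.sqrt t * p ^ t * (1 - p) ^ (m + n - t) := by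
  lift p to I using hp
  have weighted := dampedBinomial_first_moment_general hnm
    (hasLaw_binomial_of_measure_eq hX.aemeasurable hlawX)
    (hasLaw_binomial_of_measure_eq hY.aemeasurable hlawY) hind fun t ↦ (Real.sqrt t)⁻¹
  simpa only [smul_eq_mul, ← div_eq_mul_inv, Nat.cast_add, Real.div_sqrt, integral_binomial,
    ← Nat.range_succ_eq_Iic, mul_right_comm _ _ (Real.sqrt _)] using weighted
end
end

section
/- Let n, m be nonnegative integers with m + n ≥ 2, p ∈ [0,1], let X ~ Binomial(n,p) and Y ~ Binomial(m,p) be independent, and let Z = X/√(X+Y), with the convention Z = 0 when X + Y = 0. Then E[Z²] = (n(n−1)/((m+n)(m+n−1)))·(m+n)·p + (n·m/((m+n)(m+n−1)))·(1 − (1−p)^{m+n}). -/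
open MeasureTheory ProbabilityTheory

noncomputable section

/-!
Write `S = X + Y`, `N = n + m` and `h s = s⁻¹` (with `h 0 = 0`, matching the convention for `Z`),
so that `Z² = X (X - 1) h S + X h S`. Size biasing, `E[(X)_r g X] = (n)_r p ^ r E[g (T + r)]` with
`T ~ Bin(n - r, p)`, applied to `X` and to `S ~ Bin(N, p)`, gives
`(N)_r E[(X)_r h S] = (n)_r E[(S)_r h S]`. For `r = 1, 2` the right-hand expectations are
`P(S ≠ 0) = 1 - (1 - p) ^ N` and `E[S] - P(S ≠ 0) = N p - P(S ≠ 0)`.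
-/

section BinomialIntegral

open scoped unitInterval

variable {E : Type*} [NormedAddCommGroup E] [NormedSpace ℝ E] [CompleteSpace E] {p : I}

lemma binomial_real_singleton_succ (n k : ℕ) :
    Bin(n + 1, p).real {k + 1} =
      (1 - p) * Bin(n, p).real {k + 1} + p * Bin(n, p).real {k} := by
  simp only [binomial_real_singleton, Nat.choose_succ_succ, Nat.add_sub_add_right, Nat.cast_add]
  rcases lt_or_ge k n with hkn | hnk
  · rw [show n - k = n - (k + 1) + 1 by lia]
    ring
  · rw [Nat.choose_eq_zero_of_lt (Nat.lt_succ_of_le hnk)]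
    simp only [Nat.cast_zero]
    ring

lemma integral_binomial_eq_sum_range {n N : ℕ} (hnN : n < N) (f : ℕ → E) :
    ∫ k, f k ∂Bin(n, p) = ∑ k ∈ Finset.range N, Bin(n, p).real {k} • f k := by
  simp only [integral_binomial, binomial_real_singleton]
  refine Finset.sum_subset (fun k hk ↦ ?_) fun k _ hk ↦ ?_
  · exact Finset.mem_range.mpr ((Finset.mem_Iic.mp hk).trans_lt hnN)
  · rw [Finset.mem_Iic, not_le] at hk
    simp [Nat.choose_eq_zero_of_lt hk]

lemma integral_binomial_succ (n : ℕ) (f : ℕ → E) :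
    ∫ k, f k ∂Bin(n + 1, p) =
      (1 - p : ℝ) • ∫ k, f k ∂Bin(n, p) + (p : ℝ) • ∫ k, f (k + 1) ∂Bin(n, p) := by
  rw [integral_binomial_eq_sum_range (N := n + 2) (by lia) f,
    integral_binomial_eq_sum_range (N := n + 2) (by lia) f,
    integral_binomial_eq_sum_range n.lt_add_one (fun k ↦ f (k + 1)),
    Finset.sum_range_succ' _ (n + 1), Finset.sum_range_succ' _ (n + 1)]
  simp only [binomial_real_singleton_succ, binomial_real_zero, add_smul, mul_smul, pow_succ',
    Finset.sum_add_distrib, ← Finset.smul_sum, smul_add]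
  abel

lemma integral_binomial_add (n m : ℕ) (f : ℕ → E) :
    ∫ k, f k ∂Bin(n + m, p) = ∫ i, ∫ j, f (i + j) ∂Bin(m, p) ∂Bin(n, p) := by
  induction n generalizing f with
  | zero => simp [binomial_zero]
  | succ n ih =>
    simp only [Nat.succ_add n m, integral_binomial_succ, ih]
    simp only [Nat.add_right_comm _ 1]

lemma integral_cast_smul_binomial_succ (n : ℕ) (f : ℕ → E) :
    ∫ k, (k : ℝ) • f k ∂Bin(n + 1, p) = ((n + 1) * p : ℝ) • ∫ k, f (k + 1) ∂Bin(n, p) := by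
  induction n generalizing f with
  | zero => rw [integral_binomial_succ]; simp [binomial_zero]
  | succ n ih =>
    have shift : ∫ k, ((k + 1 : ℕ) : ℝ) • f (k + 1) ∂Bin(n + 1, p) =
        ∫ k, (k : ℝ) • f (k + 1) ∂Bin(n + 1, p) + ∫ k, f (k + 1) ∂Bin(n + 1, p) := by
      rw [← integral_add (integrable_binomial _) (integrable_binomial _)]
      simp only [Nat.cast_succ, add_smul, one_smul]
    rw [integral_binomial_succ, shift, ih, ih, integral_binomial_succ n (fun k ↦ f (k + 1))]
    push_cast
    module

lemma integral_descFactorial_smul_binomial (n r : ℕ) (f : ℕ → E) :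
    ∫ k, (k.descFactorial r : ℝ) • f k ∂Bin(n, p) =
      (n.descFactorial r * p ^ r : ℝ) • ∫ k, f (k + r) ∂Bin(n - r, p) := by
  induction r generalizing n f with
  | zero => simp
  | succ r ih =>
    cases n with
    | zero => simp [binomial_zero]
    | succ n =>
      have factor (k : ℕ) : (k.descFactorial (r + 1) : ℝ) • f k =
          (k : ℝ) • ((k - 1).descFactorial r : ℝ) • f k := by
        cases k with
        | zero => simp
        | succ k => rw [Nat.succ_descFactorial_succ, Nat.cast_mul, mul_smul, Nat.add_sub_cancel]
      simp only [factor]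
      rw [integral_cast_smul_binomial_succ n (fun k ↦ ((k - 1).descFactorial r : ℝ) • f k)]
      simp only [Nat.add_sub_cancel]
      rw [ih n (fun k ↦ f (k + 1)), smul_smul, Nat.succ_descFactorial_succ,
        Nat.add_sub_add_right]
      simp only [Nat.add_assoc]
      push_cast
      ring_nf

lemma descFactorial_smul_integral_binomial_add (n m r : ℕ) (f : ℕ → E) :
    ((n + m).descFactorial r : ℝ) •
        ∫ i, ∫ j, (i.descFactorial r : ℝ) • f (i + j) ∂Bin(m, p) ∂Bin(n, p) =
      (n.descFactorial r : ℝ) • ∫ s, (s.descFactorial r : ℝ) • f s ∂Bin(n + m, p) := by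
  simp only [integral_smul, integral_descFactorial_smul_binomial]
  rcases lt_or_ge n r with hnr | hrn
  · simp [Nat.descFactorial_of_lt hnr]
  · rw [Nat.sub_add_comm hrn, integral_binomial_add]
    simp only [Nat.add_right_comm _ r, smul_smul]
    ring_nf

lemma integral_cast_binomial (n : ℕ) : ∫ k, (k : ℝ) ∂Bin(n, p) = n * p := by
  simpa using integral_descFactorial_smul_binomial (p := p) n 1 (fun _ ↦ (1 : ℝ))

lemma integral_cast_mul_inv_binomial (n : ℕ) :
    ∫ k, (k : ℝ) * (k : ℝ)⁻¹ ∂Bin(n, p) = 1 - (1 - p : ℝ) ^ n := by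
  have eq_indicator : (fun k : ℕ ↦ (k : ℝ) * (k : ℝ)⁻¹) = Set.indicator {0}ᶜ 1 := by
    ext k
    rcases eq_or_ne k 0 with rfl | hk <;> simp [*]
  rw [eq_indicator, integral_indicator_one .of_discrete, probReal_compl_eq_one_sub .of_discrete,
    binomial_real_zero]

lemma integral_cast_mul_sub_one_mul_inv_binomial (n : ℕ) :
    ∫ k : ℕ, (k * (k - 1) : ℝ) * (k : ℝ)⁻¹ ∂Bin(n, p) = n * p - (1 - (1 - p : ℝ) ^ n) := by
  rw [← integral_cast_binomial, ← integral_cast_mul_inv_binomial,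
    ← integral_sub (integrable_binomial _) (integrable_binomial _)]
  congr with k
  rcases eq_or_ne k 0 with rfl | hk
  · simp
  · field_simp

lemma add_mul_integral_binomial_mul_inv_add (n m : ℕ) :
    (n + m : ℝ) * ∫ i, ∫ j, (i : ℝ) * ((i + j : ℕ) : ℝ)⁻¹ ∂Bin(m, p) ∂Bin(n, p) =
      n * (1 - (1 - p : ℝ) ^ (n + m)) := by
  have first_factorial_moment :=
    descFactorial_smul_integral_binomial_add (p := p) n m 1 (fun s ↦ (s : ℝ)⁻¹)
  simpa only [Nat.descFactorial_one, smul_eq_mul, integral_cast_mul_inv_binomial, Nat.cast_add]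
    using first_factorial_moment

lemma add_mul_integral_binomial_mul_sub_one_mul_inv_add (n m : ℕ) :
    ((n + m) * (n + m - 1) : ℝ) *
        ∫ i, ∫ j, (i * (i - 1) : ℝ) * ((i + j : ℕ) : ℝ)⁻¹ ∂Bin(m, p) ∂Bin(n, p) =
      n * (n - 1) * ((n + m) * p - (1 - (1 - p : ℝ) ^ (n + m))) := by
  have second_factorial_moment :=
    descFactorial_smul_integral_binomial_add (p := p) n m 2 (fun s ↦ (s : ℝ)⁻¹)
  simpa only [Nat.cast_descFactorial_two, smul_eq_mul, integral_cast_mul_sub_one_mul_inv_binomial,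
    Nat.cast_add] using second_factorial_moment

lemma integral_binomial_sq_mul_inv_add {n m : ℕ} (hnm : 2 ≤ n + m) :
    ∫ i, ∫ j, (i : ℝ) ^ 2 * ((i + j : ℕ) : ℝ)⁻¹ ∂Bin(m, p) ∂Bin(n, p) =
      (n * (n - 1) * ((n + m) * p) + n * m * (1 - (1 - p : ℝ) ^ (n + m))) /
        ((n + m) * (n + m - 1)) := by
  have split_sq : ∫ i, ∫ j, (i : ℝ) ^ 2 * ((i + j : ℕ) : ℝ)⁻¹ ∂Bin(m, p) ∂Bin(n, p) =
      ∫ i, ∫ j, (i * (i - 1) : ℝ) * ((i + j : ℕ) : ℝ)⁻¹ ∂Bin(m, p) ∂Bin(n, p) +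
        ∫ i, ∫ j, (i : ℝ) * ((i + j : ℕ) : ℝ)⁻¹ ∂Bin(m, p) ∂Bin(n, p) := by
    simp only [integral_const_mul]
    rw [← integral_add (integrable_binomial _) (integrable_binomial _)]
    congr with i
    ring
  have two_le : (2 : ℝ) ≤ n + m := mod_cast hnm
  rw [split_sq, eq_div_iff (mul_ne_zero (by linarith) (by linarith))]
  linear_combination add_mul_integral_binomial_mul_sub_one_mul_inv_add (p := p) n m +
    (n + m - 1 : ℝ) * add_mul_integral_binomial_mul_inv_add (p := p) n m

lemma integrable_prod_binomial {F : Type*} [NormedAddCommGroup F] (n m : ℕ) (p q : I)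
    (f : ℕ × ℕ → F) : Integrable f (Bin(n, p).prod Bin(m, q)) := by
  rw [integrable_prod_iff .of_discrete]
  exact ⟨.of_forall fun _ ↦ integrable_binomial _, integrable_binomial _⟩

end BinomialIntegral

section Law

variable {Ω α β : Type*} [MeasurableSpace Ω] [MeasurableSpace α] [MeasurableSpace β]
  {P : Measure Ω} {μ : Measure α} {ν : Measure β} {X : Ω → α} {Y : Ω → β}

lemma hasLaw_of_forall_measure_eq_singleton [Countable α] [MeasurableSingletonClass α]
    (hX : AEMeasurable X P) (h : ∀ a, P {ω | X ω = a} = μ {a}) : HasLaw X μ P where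
  map_eq := Measure.ext_of_singleton fun a ↦
    (Measure.map_apply_of_aemeasurable hX (measurableSet_singleton a)).trans (h a)

lemma integral_comp_prodMk_of_indepFun {E : Type*} [NormedAddCommGroup E] [NormedSpace ℝ E]
    [IsFiniteMeasure P] (hX : HasLaw X μ P) (hY : HasLaw Y ν P) (hXY : IndepFun X Y P)
    {f : α × β → E} (hf : Integrable f (μ.prod ν)) :
    ∫ ω, f (X ω, Y ω) ∂P = ∫ x, ∫ y, f (x, y) ∂ν ∂μ := by
  have : IsFiniteMeasure μ := hX.isFiniteMeasure_iff.mp ‹_›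
  have : IsFiniteMeasure ν := hY.isFiniteMeasure_iff.mp ‹_›
  exact ((hXY.hasLaw_prod hX hY).integral_comp hf.aestronglyMeasurable).trans (integral_prod f hf)

end Law

/-- Let `X ~ Binomial(n,p)` and `Y ~ Binomial(m,p)` be independent and
`Z = X/√(X+Y)` (with `Z = 0` when `X+Y = 0`), `m + n ≥ 2`.  Then
`E[Z²] = (n(n−1)/((m+n)(m+n−1)))·(m+n)·p + (n·m/((m+n)(m+n−1)))·(1 − (1−p)^{m+n})`. -/
theorem dampedBinomial_second_moment (n m : ℕ) (hnm : 2 ≤ m + n) (p : ℝ)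
    (hp : p ∈ Set.Icc (0 : ℝ) 1)
    (Ω : Type) [MeasurableSpace Ω] (Pr : Measure Ω) [IsProbabilityMeasure Pr]
    (X Y : Ω → ℕ) (hX : Measurable X) (hY : Measurable Y)
    (hind : IndepFun X Y Pr)
    (hlawX : ∀ j : ℕ, Pr {ω | X ω = j}
      = ENNReal.ofReal ((n.choose j : ℝ) * p ^ j * (1 - p) ^ (n - j)))
    (hlawY : ∀ j : ℕ, Pr {ω | Y ω = j}
      = ENNReal.ofReal ((m.choose j : ℝ) * p ^ j * (1 - p) ^ (m - j))) :
    ∫ ω, ((X ω : ℝ) / Real.sqrt ((X ω : ℝ) + (Y ω : ℝ))) ^ 2 ∂Pr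
      = ((n : ℝ) * ((n : ℝ) - 1) / (((m : ℝ) + n) * ((m : ℝ) + n - 1)))
            * (((m : ℝ) + n) * p)
        + ((n : ℝ) * m / (((m : ℝ) + n) * ((m : ℝ) + n - 1)))
            * (1 - (1 - p) ^ (m + n)) := by
  lift p to unitInterval using hp
  have hasLaw_X : HasLaw X Bin(n, p) Pr :=
    hasLaw_of_forall_measure_eq_singleton hX.aemeasurable fun j ↦
      (hlawX j).trans (binomial_singleton n j p).symm
  have hasLaw_Y : HasLaw Y Bin(m, p) Pr :=
    hasLaw_of_forall_measure_eq_singleton hY.aemeasurable fun j ↦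
      (hlawY j).trans (binomial_singleton m j p).symm
  have sq_eq (i j : ℕ) : ((i : ℝ) / √(i + j)) ^ 2 = (i : ℝ) ^ 2 * ((i + j : ℕ) : ℝ)⁻¹ := by
    rw [div_pow, Real.sq_sqrt (by positivity), div_eq_mul_inv, Nat.cast_add]
  simp only [sq_eq]
  rw [integral_comp_prodMk_of_indepFun hasLaw_X hasLaw_Y hind (integrable_prod_binomial n m p p
      fun x ↦ (x.1 : ℝ) ^ 2 * ((x.1 + x.2 : ℕ) : ℝ)⁻¹),
    integral_binomial_sq_mul_inv_add (add_comm m n ▸ hnm), add_comm m n, add_comm (m : ℝ)]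
  ring
end
end
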